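/- Let 0 < p ≤ 1 and let X = A + iB, where A and B are bounded self-adjoint operators on H, B is positive and invertible, and the self-adjoint operator sin(pπ)·A − cos(pπ)·B is positive and invertible (i.e. Im(e^{-ipπ}X) < 0). Then for every real λ > 0 the operator X + λI is invertible and −Im{ e^{-ipπ} X (X + λI)^{-1} } is positive and invertible. -/

import Mathlib

open ContinuousLinearMap MeasureTheory

variable {H : Type*} [NormedAddCommGroup H] [InnerProductSpace ℂ H] [CompleteSpace H]

/-- The imaginary part `(Y - Y*)/(2i)` of a bounded operator. -/
noncomputable def opIm (Y : H →L[ℂ] H) : H →L[ℂ] H := (2 * Complex.I)⁻¹ • (Y - star Y)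

/-!
Put `x = X` and `ω = -e^{-ipπ}`, so that `Im ω = sin pπ ≥ 0` and `Im (ω x) > 0`. An element `z` of
a unital C⋆-algebra with `Im z > 0` is invertible: conjugating by `(Im z)^{-1/2}` makes its
imaginary part `1`, and `a + i` is invertible for self-adjoint `a`. With `y = x + λ`, the imaginary
part of `ω y` is `Im (ω x) + λ Im ω > 0`, so `y` is invertible. Finally `Im` commutes with the
congruence `z ↦ y⋆ z y`, which takes `ω x y⁻¹` to `ω y⋆ x`, and
`Im (ω y⋆ x) = (Im ω) x⋆ x + λ Im (ω x) > 0`.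
-/

open scoped ComplexStarModule

theorem neg_exp_neg_mul_I (θ : ℝ) :
    -Complex.exp (-(θ : ℂ) * Complex.I) = ⟨-Real.cos θ, Real.sin θ⟩ := by
  rw [← Complex.ofReal_neg]
  apply Complex.ext
  · rw [Complex.neg_re, Complex.exp_ofReal_mul_I_re, Real.cos_neg]
  · rw [Complex.neg_im, Complex.exp_ofReal_mul_I_im, Real.sin_neg, neg_neg]

theorem im_neg_exp_neg_mul_pi_mul_I_nonneg {p : ℝ} (hp0 : 0 ≤ p) (hp1 : p ≤ 1) :
    0 ≤ (-Complex.exp (-(p * Real.pi : ℝ) * Complex.I)).im := by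
  rw [neg_exp_neg_mul_I]
  exact Real.sin_nonneg_of_nonneg_of_le_pi (mul_nonneg hp0 Real.pi_nonneg)
    (mul_le_of_le_one_left Real.pi_nonneg hp1)

section StarModule

variable {E : Type*} [AddCommGroup E] [Module ℂ E] [StarAddMonoid E] [StarModule ℂ E]

theorem imaginaryPart_smul_of_isSelfAdjoint {a : E} (ha : IsSelfAdjoint a) (ω : ℂ) :
    (ℑ (ω • a) : E) = ω.im • a := by
  simp [imaginaryPart_smul, ha.imaginaryPart, ha.coe_realPart]

theorem imaginaryPart_smul_add_I_smul {a b : E} (ha : IsSelfAdjoint a) (hb : IsSelfAdjoint b)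
    (ω : ℂ) : (ℑ (ω • (a + Complex.I • b)) : E) = ω.im • a + ω.re • b := by
  rw [smul_add, smul_smul, map_add, AddSubgroup.coe_add, imaginaryPart_smul_of_isSelfAdjoint ha,
    imaginaryPart_smul_of_isSelfAdjoint hb, Complex.mul_I_im]

theorem imaginaryPart_star_mul_mul {R : Type*} [NonUnitalRing R] [StarRing R] [Module ℂ R]
    [StarModule ℂ R] [IsScalarTower ℂ R R] [SMulCommClass ℂ R R] (c x : R) :
    (ℑ (star c * x * c) : R) = star c * ℑ x * c := by
  simp only [imaginaryPart_apply_coe, star_mul, star_star, mul_smul_comm, smul_mul_assoc,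
    mul_sub, sub_mul, mul_assoc]

variable {R : Type*} [Ring R] [StarRing R] [Algebra ℂ R] [StarModule ℂ R]

theorem imaginaryPart_smul_add_smul_one (ω : ℂ) (x : R) (l : ℝ) :
    (ℑ (ω • (x + (l : ℂ) • 1)) : R) = ℑ (ω • x) + (l * ω.im) • (1 : R) := by
  rw [smul_add, smul_smul, map_add, AddSubgroup.coe_add,
    imaginaryPart_smul_of_isSelfAdjoint (.one R), Complex.im_mul_ofReal, mul_comm]

theorem imaginaryPart_smul_star_add_smul_one_mul (ω : ℂ) (x : R) (l : ℝ) :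
    (ℑ (ω • (star (x + (l : ℂ) • 1) * x)) : R) = ω.im • (star x * x) + l • ℑ (ω • x) := by
  have hexpand : ω • (star (x + (l : ℂ) • 1) * x) = ω • (star x * x) + l • (ω • x) := by
    simp [add_mul, smul_comm ω]
  rw [hexpand, map_add, AddSubgroup.coe_add, map_smul imaginaryPart l,
    imaginaryPart_smul_of_isSelfAdjoint (.star_mul_self x), selfAdjoint.val_smul]

end StarModule

section CStarAlgebra

variable {A : Type*} [CStarAlgebra A]

theorem isUnit_of_imaginaryPart_eq_one {x : A} (hx : (ℑ x : A) = 1) : IsUnit x := by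
  have hI : -Complex.I ∉ spectrum ℂ (ℜ x : A) := fun h ↦ by
    simpa using (ℜ x).property.im_eq_zero_of_mem_spectrum h
  have hx_eq : x = -(algebraMap ℂ A (-Complex.I) - ℜ x) := by
    rw [neg_sub, map_neg, sub_neg_eq_add, Algebra.algebraMap_eq_smul_one, ← hx,
      realPart_add_I_smul_imaginaryPart]
  rw [hx_eq]
  exact (spectrum.notMem_iff.mp hI).neg

variable [PartialOrder A] [StarOrderedRing A]

theorem isUnit_of_isStrictlyPositive_imaginaryPart {x : A}
    (hx : IsStrictlyPositive (ℑ x : A)) : IsUnit x := by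
  set c : A := (ℑ x : A) ^ (-(1 / 2) : ℝ)
  have hc : IsStrictlyPositive c := hx.rpow _ _
  have hconj : (ℑ (star c * x * c) : A) = 1 := by
    rw [imaginaryPart_star_mul_mul, hc.isSelfAdjoint.star_eq, CFC.conjugate_rpow_neg_one_half _ hx]
  have hunit := isUnit_of_imaginaryPart_eq_one hconj
  rwa [hc.isUnit.mul_right_iff, hc.isUnit.star.mul_left_iff] at hunit

theorem isUnit_add_smul_one_of_isStrictlyPositive_imaginaryPart_smul {ω : ℂ} (hω : 0 ≤ ω.im) {x : A}
    (hx : IsStrictlyPositive (ℑ (ω • x) : A)) {l : ℝ} (hl : 0 ≤ l) :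
    IsUnit (x + (l : ℂ) • 1) := by
  have hpos : IsStrictlyPositive (ℑ (ω • (x + (l : ℂ) • 1)) : A) := by
    rw [imaginaryPart_smul_add_smul_one]
    exact hx.add_nonneg (smul_nonneg (mul_nonneg hl hω) zero_le_one)
  have hunit := isUnit_of_isStrictlyPositive_imaginaryPart hpos
  rw [Algebra.smul_def] at hunit
  exact ((Algebra.commute_algebraMap_left ω _).isUnit_mul_iff.mp hunit).2

theorem stmt18_general {ω : ℂ} (hω : 0 ≤ ω.im) {x : A}
    (hx : IsStrictlyPositive (ℑ (ω • x) : A)) {l : ℝ} (hl : 0 < l) :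
    IsUnit (x + (l : ℂ) • 1) ∧
      IsStrictlyPositive (ℑ (ω • (x * Ring.inverse (x + (l : ℂ) • 1))) : A) := by
  have hy := isUnit_add_smul_one_of_isStrictlyPositive_imaginaryPart_smul hω hx hl.le
  refine ⟨hy, ?_⟩
  rw [← hy.isStrictlyPositive_star_left_conjugate_iff, ← imaginaryPart_star_mul_mul,
    mul_smul_comm, smul_mul_assoc, mul_assoc, Ring.inverse_mul_cancel_right _ _ hy,
    imaginaryPart_smul_star_add_smul_one_mul]
  exact .nonneg_add (smul_nonneg hω (star_mul_self_nonneg x)) (hx.smul hl)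

end CStarAlgebra

theorem opIm_eq_imaginaryPart (Y : H →L[ℂ] H) : opIm Y = ℑ Y := by
  rw [opIm, imaginaryPart_apply_coe, mul_inv_rev, Complex.inv_I, mul_smul, ← Complex.coe_smul]
  simp

theorem isStrictlyPositive_iff_isPositive_and_isUnit {𝕜 E : Type*} [RCLike 𝕜]
    [NormedAddCommGroup E] [InnerProductSpace 𝕜 E] {T : E →L[𝕜] E} :
    IsStrictlyPositive T ↔ T.IsPositive ∧ IsUnit T := by
  rw [IsStrictlyPositive.iff_of_unital, nonneg_iff_isPositive]

theorem isStrictlyPositive_imaginaryPart_neg_iff {Y : H →L[ℂ] H} :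
    IsStrictlyPositive (ℑ (-Y) : H →L[ℂ] H) ↔ (-(opIm Y)).IsPositive ∧ IsUnit (opIm Y) := by
  rw [isStrictlyPositive_iff_isPositive_and_isUnit, map_neg, NegMemClass.coe_neg,
    ← opIm_eq_imaginaryPart, IsUnit.neg_iff]

theorem isStrictlyPositive_imaginaryPart_neg_exp_smul_iff {A B : H →L[ℂ] H}
    (hA : IsSelfAdjoint A) (hB : IsSelfAdjoint B) (θ : ℝ) :
    IsStrictlyPositive
        (ℑ (-Complex.exp (-(θ : ℂ) * Complex.I) • (A + Complex.I • B)) : H →L[ℂ] H) ↔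
      (Real.sin θ • A - Real.cos θ • B).IsPositive ∧
        IsUnit (Real.sin θ • A - Real.cos θ • B) := by
  rw [neg_exp_neg_mul_I, imaginaryPart_smul_add_I_smul hA hB, neg_smul, ← sub_eq_add_neg,
    isStrictlyPositive_iff_isPositive_and_isUnit]

/-- For `0 < p ≤ 1` and `X = A + iB` with `B > 0` and `sin(pπ)A − cos(pπ)B > 0`
(i.e. `Im(e^{-ipπ}X) < 0`): for every `λ > 0` the operator `X + λI` is invertible and
`−Im{e^{-ipπ} X (X + λI)⁻¹}` is positive and invertible. -/
theorem stmt18 [TopologicalSpace.SeparableSpace H] (hinf : ¬ FiniteDimensional ℂ H)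
    (p : ℝ) (hp0 : 0 < p) (hp1 : p ≤ 1)
    (A B X : H →L[ℂ] H) (hA : IsSelfAdjoint A) (hB : IsSelfAdjoint B)
    (hBpos : B.IsPositive) (hBU : IsUnit B)
    (hsec :
      (Real.sin (p * Real.pi) • A - Real.cos (p * Real.pi) • B).IsPositive ∧
        IsUnit (Real.sin (p * Real.pi) • A - Real.cos (p * Real.pi) • B))
    (hX : X = A + Complex.I • B) :
    ∀ l : ℝ, 0 < l →
      IsUnit (X + (l : ℂ) • 1) ∧
      (-(opIm (Complex.exp (-(p * Real.pi : ℝ) * Complex.I) •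
          (X * Ring.inverse (X + (l : ℂ) • 1))))).IsPositive ∧
      IsUnit (opIm (Complex.exp (-(p * Real.pi : ℝ) * Complex.I) •
          (X * Ring.inverse (X + (l : ℂ) • 1)))) := by
  intro l hl
  rw [← isStrictlyPositive_imaginaryPart_neg_iff, ← neg_smul]
  exact stmt18_general (im_neg_exp_neg_mul_pi_mul_I_nonneg hp0.le hp1)
    (hX ▸ (isStrictlyPositive_imaginaryPart_neg_exp_smul_iff hA hB _).2 hsec) hl
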